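/- Suppose p₁, p₂, p₃ are integers with 0 < p₁ < p₂ < p₃ and u = (u₁,…,u₇) ∈ N_ν(p). If u₁ = 0, then for each α ∈ {1,2,3} the pair (u_{2α}, u_{2α+1}) is not (0,0). -/

import Mathlib

open Quaternion

noncomputable section

/-- The imaginary quaternion unit `i`. -/
def qi : ℍ[ℝ] := ⟨0, 1, 0, 0⟩
/-- The imaginary quaternion unit `j`. -/
def qj : ℍ[ℝ] := ⟨0, 0, 1, 0⟩
/-- The imaginary quaternion unit `k`. -/
def qk : ℍ[ℝ] := ⟨0, 0, 0, 1⟩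

/-- `u ∈ N_ν(p)`: `u` lies on the unit sphere of `ℍ⁷`, the `Sp(1)` moment map vanishes,
and the `U(1)_p` moment map vanishes.  Coordinates are `0`-indexed, so `u 0` is `u₁` and the
quaternionic pairs are `(u 1, u 2), (u 3, u 4), (u 5, u 6)`. -/
def inN (p₁ p₂ p₃ : ℤ) (u : Fin 7 → ℍ[ℝ]) : Prop :=
  (∑ α, ‖u α‖ ^ 2) = 1 ∧
  (∑ α, star (u α) * qi * u α) = 0 ∧
  (∑ α, star (u α) * qj * u α) = 0 ∧
  (∑ α, star (u α) * qk * u α) = 0 ∧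
  (p₁ : ℍ[ℝ]) * (star (u 1) * u 2 - star (u 2) * u 1) +
    (p₂ : ℍ[ℝ]) * (star (u 3) * u 4 - star (u 4) * u 3) +
    (p₃ : ℍ[ℝ]) * (star (u 5) * u 6 - star (u 6) * u 5) = 0

/-- The action of `(λ, z) ∈ Sp(1) × U(1)_p` on `ℍ⁷`: `z` fixes `u 0` and rotates each
quaternionic pair `(u (2α-1), u (2α))` by the phase `z ^ pα`, and then `λ` multiplies every
coordinate on the left. -/
def act (p₁ p₂ p₃ : ℤ) (lam : ℍ[ℝ]) (z : ℂ) (u : Fin 7 → ℍ[ℝ]) : Fin 7 → ℍ[ℝ] :=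
  fun α => lam *
    (![u 0,
       (z ^ p₁).re • u 1 + (z ^ p₁).im • u 2,
       (-(z ^ p₁).im) • u 1 + (z ^ p₁).re • u 2,
       (z ^ p₂).re • u 3 + (z ^ p₂).im • u 4,
       (-(z ^ p₂).im) • u 3 + (z ^ p₂).re • u 4,
       (z ^ p₃).re • u 5 + (z ^ p₃).im • u 6,
       (-(z ^ p₃).im) • u 5 + (z ^ p₃).re • u 6] α)

/-!
Multiplying `4 Re w = w - i w i - j w j - k w k`, for `w = x conj(u_α)`, on the right by `u_α` and
summing over `α` turns the vanishing of the `Sp(1)` moment map into the statement that the `u_α`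
form a tight frame of `ℍ`. If `u₁` and one pair vanish, only four coordinates `a, b, c, d` remain,
and a tight frame of four vectors in a four-dimensional space is orthogonal with equal norms. The
two surviving terms of the `U(1)` moment map are then `2 p conj(a) b` and `2 q conj(c) d`, whose
norms are `|p|` and `|q|` times the same nonzero factor; as these terms cancel, `|p| = |q|`.
-/

section InnerProduct

variable {𝕜 E ι : Type*} [RCLike 𝕜] [NormedAddCommGroup E] [InnerProductSpace 𝕜 E] [Fintype ι]

variable (𝕜) in
/-- The family `u` is a tight frame with frame bound `t`, expressed by its reconstruction formula.
No sign or nonvanishing of `t` is imposed. -/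
def IsTightFrame (u : ι → E) (t : 𝕜) : Prop :=
  ∀ x, ∑ α, inner 𝕜 (u α) x • u α = t • x

lemma IsTightFrame.span_eq_top {u : ι → E} {t : 𝕜} (hu : IsTightFrame 𝕜 u t) (ht : t ≠ 0) :
    Submodule.span 𝕜 (Set.range u) = ⊤ := by
  refine Submodule.eq_top_iff'.mpr fun x => (Submodule.smul_mem_iff _ ht).mp ?_
  rw [← hu x]
  exact Submodule.sum_smul_mem _ _ fun α _ => Submodule.subset_span (Set.mem_range_self α)

lemma IsTightFrame.inner_eq [DecidableEq ι] {u : ι → E} {t : 𝕜} (hu : IsTightFrame 𝕜 u t)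
    (ht : t ≠ 0) (hcard : Fintype.card ι ≤ Module.finrank 𝕜 E) (α β : ι) :
    inner 𝕜 (u α) (u β) = if α = β then t else 0 := by
  have hindep : LinearIndependent 𝕜 u :=
    linearIndependent_of_top_le_span_of_card_le_finrank (hu.span_eq_top ht).ge hcard
  have hcomb : ∑ γ, inner 𝕜 (u γ) (u β) • u γ = ∑ γ, (if γ = β then t else 0) • u γ := by
    simp [hu (u β)]
  exact congrFun (hindep.fintypeLinearCombination_injective hcomb) α

lemma IsTightFrame.comp_injective {κ : Type*} [Fintype κ] {u : ι → E} {t : 𝕜}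
    (hu : IsTightFrame 𝕜 u t) {e : κ → ι} (he : e.Injective) (h0 : ∀ α ∉ Set.range e, u α = 0) :
    IsTightFrame 𝕜 (u ∘ e) t := fun x =>
  (Fintype.sum_of_injective e he _ _ (fun α hα => by rw [h0 α hα, smul_zero])
    fun _ => rfl).trans (hu x)

end InnerProduct

lemma four_mul_re_eq (x : ℍ[ℝ]) :
    ((4 * x.re : ℝ) : ℍ[ℝ]) = x - qi * x * qi - qj * x * qj - qk * x * qk := by
  ext <;> simp only [re_sub, imI_sub, imJ_sub, imK_sub, re_mul, imI_mul, imJ_mul, imK_mul, re_coe,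
    imI_coe, imJ_coe, imK_coe] <;> simp only [qi, qj, qk] <;> ring

lemma four_smul_inner_smul_eq (u x : ℍ[ℝ]) :
    (4 : ℝ) • (inner ℝ u x • u) = (‖u‖ ^ 2) • x - qi * x * (star u * qi * u) -
      qj * x * (star u * qj * u) - qk * x * (star u * qk * u) := by
  have hnorm : x * (star u * u) = (‖u‖ ^ 2) • x := by
    rw [star_mul_self, normSq_eq_norm_mul_self, ← sq, mul_coe_eq_smul]
  rw [real_inner_comm, inner_def, smul_smul, ← coe_mul_eq_smul, four_mul_re_eq, ← hnorm]
  noncomm_ring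

lemma isTightFrame_of_sp1_moment_eq_zero {ι : Type*} [Fintype ι] {u : ι → ℍ[ℝ]}
    (hi : ∑ α, star (u α) * qi * u α = 0) (hj : ∑ α, star (u α) * qj * u α = 0)
    (hk : ∑ α, star (u α) * qk * u α = 0) :
    IsTightFrame ℝ u ((∑ α, ‖u α‖ ^ 2) / 4) := by
  intro x
  have hsum : (4 : ℝ) • ∑ α, inner ℝ (u α) x • u α = (∑ α, ‖u α‖ ^ 2) • x := by
    simp only [Finset.smul_sum, four_smul_inner_smul_eq, Finset.sum_sub_distrib, ← Finset.mul_sum,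
      hi, hj, hk, mul_zero, sub_zero, Finset.sum_smul]
  rw [div_eq_inv_mul, mul_smul, ← hsum, inv_smul_smul₀ four_ne_zero]

lemma norm_star_mul_sub_star_mul {a b : ℍ[ℝ]} (h : inner ℝ a b = 0) :
    ‖star a * b - star b * a‖ = 2 * (‖a‖ * ‖b‖) := by
  have hre : (star a * b).re = 0 := by
    rw [inner_def] at h
    simp only [re_mul, re_star, imI_star, imJ_star, imK_star] at h ⊢
    linarith
  have hstar : star b * a = -(star a * b) := by
    rw [← star_eq_neg.mpr hre, star_mul, star_star]
  rw [hstar, sub_neg_eq_add, ← two_smul ℝ, norm_smul, norm_mul, _root_.norm_star,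
    Real.norm_two]

lemma abs_eq_abs_of_isTightFrame {p q t : ℝ} {v : Fin 4 → ℍ[ℝ]} (hv : IsTightFrame ℝ v t)
    (ht : t ≠ 0) (hpq : p • (star (v 0) * v 1 - star (v 1) * v 0) +
      q • (star (v 2) * v 3 - star (v 3) * v 2) = 0) :
    |p| = |q| := by
  have hinner := hv.inner_eq ht (by rw [Fintype.card_fin, finrank_eq_four])
  have hnorm (α : Fin 4) : ‖v α‖ = √t := by
    rw [norm_eq_sqrt_real_inner, hinner, if_pos rfl]
  have ht_nonneg : 0 ≤ t := by
    simpa only [hinner, if_pos] using real_inner_self_nonneg (x := v 0)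
  have hpair {α β : Fin 4} (h : α ≠ β) : ‖star (v α) * v β - star (v β) * v α‖ = 2 * t := by
    rw [norm_star_mul_sub_star_mul ((hinner α β).trans (if_neg h)), hnorm, hnorm,
      Real.mul_self_sqrt ht_nonneg]
  have hcancel := congrArg norm (eq_neg_of_add_eq_zero_left hpq)
  rw [norm_neg, norm_smul, norm_smul, hpair (by decide), hpair (by decide)] at hcancel
  exact mul_right_cancel₀ (mul_ne_zero two_ne_zero ht) hcancel

theorem no_pair_vanishes_on_S0_general (p₁ p₂ p₃ : ℤ) (h₁₂ : |p₁| ≠ |p₂|) (h₁₃ : |p₁| ≠ |p₃|)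
    (h₂₃ : |p₂| ≠ |p₃|) (u : Fin 7 → ℍ[ℝ]) (hu : inN p₁ p₂ p₃ u) (hu1 : u 0 = 0) :
    ¬(u 1 = 0 ∧ u 2 = 0) ∧ ¬(u 3 = 0 ∧ u 4 = 0) ∧ ¬(u 5 = 0 ∧ u 6 = 0) := by
  obtain ⟨hnorm, hi, hj, hk, hm⟩ := hu
  have hframe : IsTightFrame ℝ u (1 / 4) := hnorm ▸ isTightFrame_of_sp1_moment_eq_zero hi hj hk
  have abs_eq {p q : ℤ} (e : Fin 4 → Fin 7) (he : e.Injective) (h0 : ∀ α ∉ Set.range e, u α = 0)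
      (hpq : (p : ℍ[ℝ]) * (star (u (e 0)) * u (e 1) - star (u (e 1)) * u (e 0)) +
        (q : ℍ[ℝ]) * (star (u (e 2)) * u (e 3) - star (u (e 3)) * u (e 2)) = 0) : |p| = |q| := by
    have habs : |(p : ℝ)| = |(q : ℝ)| :=
      abs_eq_abs_of_isTightFrame (hframe.comp_injective he h0) (by norm_num)
        (by simpa [Int.cast_smul_eq_zsmul] using hpq)
    exact_mod_cast habs
  refine ⟨fun ⟨h, h'⟩ => h₂₃ ?_, fun ⟨h, h'⟩ => h₁₃ ?_, fun ⟨h, h'⟩ => h₁₂ ?_⟩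
  · exact abs_eq ![3, 4, 5, 6] (by decide) (by simp [Fin.forall_fin_succ, *])
      (by simpa [h, h'] using hm)
  · exact abs_eq ![1, 2, 5, 6] (by decide) (by simp [Fin.forall_fin_succ, *])
      (by simpa [h, h'] using hm)
  · exact abs_eq ![1, 2, 3, 4] (by decide) (by simp [Fin.forall_fin_succ, *])
      (by simpa [h, h'] using hm)

/-- Part (iii) of Corollary 2.11 of the paper: if `0 < p₁ < p₂ < p₃` and `u ∈ N_ν(p)` has
`u₁ = 0`, then no quaternionic pair `(u_{2α}, u_{2α+1})` vanishes. -/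
theorem no_pair_vanishes_on_S0 (p₁ p₂ p₃ : ℤ) (hp₁ : 0 < p₁) (hp₁₂ : p₁ < p₂) (hp₂₃ : p₂ < p₃)
    (u : Fin 7 → ℍ[ℝ]) (hu : inN p₁ p₂ p₃ u) (hu1 : u 0 = 0) :
    ¬(u 1 = 0 ∧ u 2 = 0) ∧ ¬(u 3 = 0 ∧ u 4 = 0) ∧ ¬(u 5 = 0 ∧ u 6 = 0) := by
  exact no_pair_vanishes_on_S0_general p₁ p₂ p₃ (by grind) (by grind) (by grind) u hu hu1
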